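/- Let 1/2 < κ < 1 and suppose E(X^+) < ∞ with W(y) > 0 for all y > 0. If I_κ(λ) < ∞ for some λ > 0, then lim_{x→∞} (W(x))^{κ/(1−κ)} / x^{(2κ−1)/(1−κ)} = 0. -/

import Mathlib

/-!
Write `R(y) = W(y)^{κ/(1-κ)} / y^{(2κ-1)/(1-κ)}`, so that `I_κ(λ) = ∫_1^∞ exp(-λ / R(y)) dy/y`.
Every interval `(x, 2x]` has `dy/y`-measure at least `1/2`, while the integral over it tends to
`0` as `x → ∞`; hence for large `x` it contains a point `y` at which `exp(-λ / R(y))`, and with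
it `R(y)`, is small. Since `W` is nonnegative and nondecreasing, `R(x)` is at most a constant
times `R(y)` for all `y ∈ (x, 2x]`, so `R(x)` is small too.
-/

open MeasureTheory ProbabilityTheory Filter Set
open scoped ENNReal

noncomputable section

variable {Ω : Type*} [MeasurableSpace Ω]

/-- `W(y) = ∫_0^y ∫_{(z,∞)} x F(dx) dz`, where `F` is the distribution of `X`. -/
def Wfn (P : Measure Ω) (X : Ω → ℝ) (y : ℝ) : ℝ :=
  ∫ z in (0 : ℝ)..y, ∫ ω, (if z < X ω then X ω else 0) ∂P

/-- `I_κ(λ) = ∫_1^∞ exp{-λ (y^{(2κ-1)/κ}/W(y))^{κ/(1-κ)}} dy/y ≤ ∞`. -/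
def Ifn (P : Measure Ω) (X : Ω → ℝ) (κ lam : ℝ) : ℝ≥0∞ :=
  ∫⁻ y in Set.Ioi (1 : ℝ),
    ENNReal.ofReal
      (Real.exp (-lam * (y ^ ((2 * κ - 1) / κ) / Wfn P X y) ^ (κ / (1 - κ))) / y)

section Tail

variable {α : Type*} [MeasurableSpace α] [TopologicalSpace α] [LinearOrder α]
  [OrderClosedTopology α] [OpensMeasurableSpace α] [(atTop : Filter α).IsCountablyGenerated]
  {μ : Measure α} {a : α}

lemma tendsto_measure_Ioi_atTop_zero (ha : μ (Ioi a) ≠ ∞) :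
    Tendsto (fun x => μ (Ioi x)) atTop (nhds 0) := by
  have h_inter : ⋂ x : α, Ioi x = ∅ :=
    eq_empty_of_forall_notMem fun y hy => lt_irrefl y (mem_iInter.1 hy y)
  simpa only [h_inter, measure_empty, Function.comp_def] using
    tendsto_measure_iInter_atTop (fun _ => measurableSet_Ioi.nullMeasurableSet)
      (fun _ _ h => Ioi_subset_Ioi h) ⟨a, ha⟩

lemma tendsto_setLIntegral_Ioi_atTop_zero {f : α → ℝ≥0∞} (hf : ∫⁻ y in Ioi a, f y ∂μ ≠ ∞) :
    Tendsto (fun x => ∫⁻ y in Ioi x, f y ∂μ) atTop (nhds 0) := by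
  simp only [← withDensity_apply f measurableSet_Ioi] at hf ⊢
  exact tendsto_measure_Ioi_atTop_zero hf

end Tail

section LogarithmicScale

lemma ofReal_le_setLIntegral_Ioc_div {f : ℝ → ℝ} {c r x : ℝ} (hc : 0 ≤ c) (hr : 0 < r)
    (hx : 0 < x) (hf : ∀ y ∈ Ioc x (r * x), c ≤ f y) :
    ENNReal.ofReal (c * (1 - r⁻¹)) ≤ ∫⁻ y in Ioc x (r * x), ENNReal.ofReal (f y / y) := by
  calc ENNReal.ofReal (c * (1 - r⁻¹))
      = ∫⁻ _ in Ioc x (r * x), ENNReal.ofReal (c / (r * x)) := by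
        rw [setLIntegral_const, Real.volume_Ioc, ← ENNReal.ofReal_mul (by positivity)]
        congr 1
        field_simp
    _ ≤ ∫⁻ y in Ioc x (r * x), ENNReal.ofReal (f y / y) := by
        refine setLIntegral_mono' measurableSet_Ioc fun y hy => ENNReal.ofReal_le_ofReal ?_
        exact div_le_div₀ (hc.trans (hf y hy)) (hf y hy) (hx.trans hy.1) hy.2

lemma eventually_exists_mem_Ioc_lt_of_setLIntegral_div_ne_top {f : ℝ → ℝ} {a c r : ℝ}
    (hf : ∫⁻ y in Ioi a, ENNReal.ofReal (f y / y) ≠ ∞) (hc : 0 < c) (hr : 1 < r) :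
    ∀ᶠ x in atTop, ∃ y ∈ Ioc x (r * x), f y < c := by
  have hmass : 0 < c * (1 - r⁻¹) := mul_pos hc (sub_pos.2 (inv_lt_one_of_one_lt₀ hr))
  filter_upwards [(tendsto_setLIntegral_Ioi_atTop_zero hf).eventually_lt_const
    (ENNReal.ofReal_pos.2 hmass), eventually_gt_atTop 0] with x htail hx
  by_contra! hge
  refine htail.not_ge ?_
  calc ENNReal.ofReal (c * (1 - r⁻¹))
      ≤ ∫⁻ y in Ioc x (r * x), ENNReal.ofReal (f y / y) :=
        ofReal_le_setLIntegral_Ioc_div hc.le (zero_lt_one.trans hr) hx hge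
    _ ≤ ∫⁻ y in Ioi x, ENNReal.ofReal (f y / y) := lintegral_mono_set Ioc_subset_Ioi_self

lemma tendsto_zero_of_setLIntegral_exp_neg_mul_inv_div_ne_top {R : ℝ → ℝ} {a lam r C : ℝ}
    (hlam : 0 ≤ lam) (hr : 1 < r) (hC : 0 < C) (hR_nonneg : ∀ᶠ x in atTop, 0 ≤ R x)
    (hR_le : ∀ᶠ x in atTop, ∀ y ∈ Ioc x (r * x), R x ≤ C * R y)
    (hI : ∫⁻ y in Ioi a, ENNReal.ofReal (Real.exp (-lam * (R y)⁻¹) / y) ≠ ∞) :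
    Tendsto R atTop (nhds 0) := by
  refine tendsto_order.2 ⟨fun b hb => hR_nonneg.mono fun x hx => hb.trans_le hx, fun ε hε => ?_⟩
  have hδ : 0 < ε / C := div_pos hε hC
  filter_upwards [hR_le, eventually_exists_mem_Ioc_lt_of_setLIntegral_div_ne_top hI
    (Real.exp_pos (-lam * (ε / C)⁻¹)) hr] with x hRx hsmall
  obtain ⟨y, hy, hexp⟩ := hsmall
  have hinv : (ε / C)⁻¹ < (R y)⁻¹ := by
    rw [Real.exp_lt_exp, neg_mul, neg_mul, neg_lt_neg_iff] at hexp
    exact lt_of_mul_lt_mul_left hexp hlam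
  have hRy : R y < ε / C :=
    (inv_lt_inv₀ hδ (inv_pos.1 ((inv_pos.2 hδ).trans hinv))).1 hinv
  calc R x ≤ C * R y := hRx y hy
    _ < C * (ε / C) := mul_lt_mul_of_pos_left hRy hC
    _ = ε := mul_div_cancel₀ ε hC.ne'

end LogarithmicScale

section PowerRatio

lemma rpow_le_rpow_abs_mul_rpow {x y r : ℝ} (p : ℝ) (hx : 0 < x) (hxy : x ≤ y)
    (hyr : y ≤ r * x) : y ^ p ≤ r ^ |p| * x ^ p := by
  have hquot : 1 ≤ y / x := (one_le_div hx).2 hxy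
  have hquot_le : y / x ≤ r := (div_le_iff₀ hx).2 hyr
  calc y ^ p = (y / x) ^ p * x ^ p := by
        rw [← Real.mul_rpow (zero_le_one.trans hquot) hx.le, div_mul_cancel₀ y hx.ne']
    _ ≤ r ^ |p| * x ^ p := by
        gcongr
        calc (y / x) ^ p ≤ (y / x) ^ |p| := Real.rpow_le_rpow_of_exponent_le hquot (le_abs_self p)
          _ ≤ r ^ |p| := by gcongr

lemma rpow_div_rpow_le_rpow_abs_mul {x y r u v b : ℝ} (p : ℝ) (hx : 0 < x) (hxy : x ≤ y)
    (hyr : y ≤ r * x) (hu : 0 ≤ u) (huv : u ≤ v) (hb : 0 ≤ b) :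
    u ^ b / x ^ p ≤ r ^ |p| * (v ^ b / y ^ p) := by
  have hy : 0 < y := hx.trans_le hxy
  have huv_rpow : u ^ b ≤ v ^ b := Real.rpow_le_rpow hu huv hb
  rw [← mul_div_assoc, div_le_div_iff₀ (Real.rpow_pos_of_pos hx p) (Real.rpow_pos_of_pos hy p)]
  calc u ^ b * y ^ p ≤ v ^ b * (r ^ |p| * x ^ p) :=
        mul_le_mul huv_rpow (rpow_le_rpow_abs_mul_rpow p hx hxy hyr) (by positivity)
          ((Real.rpow_nonneg hu b).trans huv_rpow)
    _ = r ^ |p| * v ^ b * x ^ p := by ring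

lemma rpow_div_rpow_eq_inv {y w : ℝ} (a b : ℝ) (hy : 0 ≤ y) (hw : 0 ≤ w) :
    (y ^ a / w) ^ b = (w ^ b / y ^ (a * b))⁻¹ := by
  rw [Real.div_rpow (Real.rpow_nonneg hy a) hw, ← Real.rpow_mul hy, inv_div]

end PowerRatio

section TruncatedMean

variable {P : Measure Ω} {X : Ω → ℝ}

lemma integrable_ite_lt (hX : Integrable (fun ω => max (X ω) 0) P) {z : ℝ} (hz : 0 ≤ z) :
    Integrable (fun ω => if z < X ω then X ω else 0) P := by
  have h_eq : (fun ω => if z < X ω then X ω else 0) =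
      {ω | z < max (X ω) 0}.indicator fun ω => max (X ω) 0 := by
    ext ω
    simp only [indicator_apply, mem_ofPred_eq, lt_max_iff, hz.not_gt, or_false]
    split_ifs with h
    · exact (max_eq_left (hz.trans h.le)).symm
    · rfl
  rw [h_eq]
  exact hX.indicator₀ (nullMeasurableSet_lt aemeasurable_const hX.aemeasurable)

lemma ite_lt_nonneg {x z : ℝ} (hz : 0 ≤ z) : 0 ≤ if z < x then x else 0 := by
  split_ifs with h
  exacts [hz.trans h.le, le_rfl]

lemma ite_lt_le_ite_lt {x z w : ℝ} (hz : 0 ≤ z) (hzw : z ≤ w) :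
    (if w < x then x else 0) ≤ if z < x then x else 0 := by
  split_ifs <;> linarith

lemma antitoneOn_integral_ite_lt (hX : Integrable (fun ω => max (X ω) 0) P) :
    AntitoneOn (fun z => ∫ ω, (if z < X ω then X ω else 0) ∂P) (Ici 0) :=
  fun _ hz _ hw hzw => integral_mono (integrable_ite_lt hX hw) (integrable_ite_lt hX hz)
    fun _ => ite_lt_le_ite_lt hz hzw

lemma monotoneOn_Wfn (hX : Integrable (fun ω => max (X ω) 0) P) :
    MonotoneOn (Wfn P X) (Ici 0) := by
  intro x hx y hy hxy
  refine intervalIntegral.integral_mono_interval le_rfl hx hxy ?_ ?_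
  · filter_upwards [ae_restrict_mem measurableSet_Ioc] with z hz
    exact integral_nonneg fun _ => ite_lt_nonneg hz.1.le
  · refine ((antitoneOn_integral_ite_lt hX).mono ?_).intervalIntegrable
    rw [uIcc_of_le hy]
    exact Icc_subset_Ici_self

lemma Wfn_nonneg {y : ℝ} (hy : 0 ≤ y) : 0 ≤ Wfn P X y :=
  intervalIntegral.integral_nonneg hy fun _ hz => integral_nonneg fun _ => ite_lt_nonneg hz.1

lemma Ifn_eq_setLIntegral_exp_neg_mul_inv_div {κ : ℝ} (hκ : κ ≠ 0) (lam : ℝ) :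
    Ifn P X κ lam = ∫⁻ y in Ioi (1 : ℝ), ENNReal.ofReal (Real.exp
      (-lam * (Wfn P X y ^ (κ / (1 - κ)) / y ^ ((2 * κ - 1) / (1 - κ)))⁻¹) / y) := by
  refine setLIntegral_congr_fun measurableSet_Ioi fun y hy => ?_
  have hy0 : 0 ≤ y := zero_le_one.trans (mem_Ioi.1 hy).le
  simp only [rpow_div_rpow_eq_inv _ _ hy0 (Wfn_nonneg hy0), div_mul_div_cancel₀ hκ]

end TruncatedMean

theorem stmt18_general {P : Measure Ω} {X : Ω → ℝ}
    (hX : Integrable (fun ω => max (X ω) 0) P) {κ lam : ℝ} (hκ0 : 0 < κ) (hκ1 : κ < 1)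
    (hlam : 0 ≤ lam) (hI : Ifn P X κ lam ≠ ∞) :
    Tendsto (fun x : ℝ => Wfn P X x ^ (κ / (1 - κ)) / x ^ ((2 * κ - 1) / (1 - κ)))
      atTop (nhds 0) := by
  rw [Ifn_eq_setLIntegral_exp_neg_mul_inv_div hκ0.ne'] at hI
  refine tendsto_zero_of_setLIntegral_exp_neg_mul_inv_div_ne_top hlam one_lt_two
    (Real.rpow_pos_of_pos two_pos |(2 * κ - 1) / (1 - κ)|) ?_ ?_ hI
  · filter_upwards [eventually_ge_atTop 0] with x hx
    exact div_nonneg (Real.rpow_nonneg (Wfn_nonneg hx) _) (Real.rpow_nonneg hx _)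
  · filter_upwards [eventually_gt_atTop 0] with x hx y hy
    exact rpow_div_rpow_le_rpow_abs_mul _ hx hy.1.le hy.2 (Wfn_nonneg hx.le)
      (monotoneOn_Wfn hX hx.le (hx.trans hy.1).le hy.1.le) (div_pos hκ0 (sub_pos.2 hκ1)).le

/-- For `1/2 < κ < 1`, if `E(X⁺) < ∞`, `W(y) > 0` for `y > 0` and `I_κ(λ) < ∞` for some
`λ > 0`, then `W(x)^{κ/(1-κ)} / x^{(2κ-1)/(1-κ)} → 0` as `x → ∞`. -/
theorem stmt18 (P : Measure Ω) [IsProbabilityMeasure P] (X : Ω → ℝ)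
    (hmeas : Measurable X) (hneg : 0 < P {ω | X ω < 0}) (hpos : 0 < P {ω | 0 ≤ X ω})
    (hplus : Integrable (fun ω => max (X ω) 0) P)
    (κ : ℝ) (hκ1 : 1 / 2 < κ) (hκ2 : κ < 1)
    (hW : ∀ y : ℝ, 0 < y → 0 < Wfn P X y)
    (hI : ∃ lam : ℝ, 0 < lam ∧ Ifn P X κ lam < ⊤) :
    Filter.Tendsto
      (fun x : ℝ => Wfn P X x ^ (κ / (1 - κ)) / x ^ ((2 * κ - 1) / (1 - κ)))
      Filter.atTop (nhds 0) := by
  obtain ⟨lam, hlam, hfin⟩ := hI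
  exact stmt18_general hplus (one_half_pos.trans hκ1) hκ2 hlam.le hfin.ne

end
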